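/- In the HTP-step setting, suppose additionally that l ∈ S ∩ S*. Then the l-th entry of the least-squares solution x satisfies |x_l| ≥ (1 − (1/γ)·√((1+δ)/(1−δ))·r') · |x*_l|, where r' = ‖x*_{S*\S}‖₂ / ‖x*_{S*\{l}}‖₂. -/

import Mathlib

/-!
Write `y` for the sparse vector `x*` and let `T ⊇ supp y`. Split `y = y_S + u` with `u` the part of
`y` off `S`, and put `w = x - y_S`, a vector supported on `S`. The normal equations say that
`A (x - y) = A w - A u` is orthogonal to the columns of `A` indexed by `S`, hence to `A w`, so `A w`
is the orthogonal projection of `A u` onto their span and `‖A w‖ ≤ ‖A u‖`. The restricted isometry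
property at both ends gives `(1 - δ) ‖w‖² ≤ (1 + δ) ‖u‖²`, so
`|x_l - y_l| = |w_l| ≤ √((1 + δ) / (1 - δ)) ‖y_{T \ S}‖`, and the dominance condition turns the
right-hand side into a multiple of `|y_l|`.
-/

open Matrix Finset

/-- The support of a vector, as a `Finset`. -/
noncomputable def suppF {N : ℕ} (x : Fin N → ℝ) : Finset (Fin N) :=
  Finset.univ.filter fun i => x i ≠ 0

/-- The Euclidean norm of the restriction of `v` to the index set `T`. -/
noncomputable def pnorm {N : ℕ} (T : Finset (Fin N)) (v : Fin N → ℝ) : ℝ :=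
  Real.sqrt (∑ i ∈ T, v i ^ 2)

section LeastSquares

variable {ι κ R K : Type*} [Fintype ι] [DecidableEq ι] [Fintype κ]

/-- The least-squares solution `(Bᵀ B)⁻¹ Bᵀ b` of `B z = b`, given by its closed formula. For
real `B` it minimises `‖B z - b‖` when `Bᵀ B` is invertible; otherwise the formula returns `0`. -/
noncomputable def leastSquares [CommRing R] (B : Matrix κ ι R) (b : κ → R) : ι → R :=
  ((Bᵀ * B)⁻¹ * Bᵀ) *ᵥ b

theorem isUnit_transpose_mul_self_of_injective [Field K] [LinearOrder K] [IsStrictOrderedRing K]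
    {B : Matrix κ ι K} (hB : Function.Injective B.mulVec) : IsUnit (Bᵀ * B) := by
  rw [← mulVec_injective_iff_isUnit, ← coe_mulVecLin, ← LinearMap.ker_eq_bot,
    ker_mulVecLin_transpose_mul_self, LinearMap.ker_eq_bot]
  exact hB

theorem transpose_mulVec_leastSquares_residual [CommRing R] {B : Matrix κ ι R}
    (hB : IsUnit (Bᵀ * B)) (b : κ → R) : Bᵀ *ᵥ (B *ᵥ leastSquares B b - b) = 0 := by
  rw [leastSquares, mulVec_sub, mulVec_mulVec, mulVec_mulVec, ← Matrix.mul_assoc,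
    mul_nonsing_inv _ ((isUnit_iff_isUnit_det _).mp hB), Matrix.one_mul, sub_self]

theorem mulVec_dotProduct_leastSquares_residual [CommRing R] {B : Matrix κ ι R}
    (hB : IsUnit (Bᵀ * B)) (b : κ → R) (v : ι → R) :
    (B *ᵥ v) ⬝ᵥ (B *ᵥ leastSquares B b - b) = 0 := by
  rw [← vecMul_transpose, ← dotProduct_mulVec, transpose_mulVec_leastSquares_residual hB,
    dotProduct_zero]

end LeastSquares

theorem sum_sq_le_of_dotProduct_sub_eq_zero {κ R : Type*} [Fintype κ] [CommRing R] [LinearOrder R]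
    [IsStrictOrderedRing R] {a b : κ → R} (h : a ⬝ᵥ (a - b) = 0) :
    ∑ r, a r ^ 2 ≤ ∑ r, b r ^ 2 := by
  have pythagoras : ∑ r, b r ^ 2 = ∑ r, a r ^ 2 + ∑ r, (a r - b r) ^ 2 - 2 * (a ⬝ᵥ (a - b)) := by
    simp only [dotProduct, Pi.sub_apply, Finset.mul_sum, ← Finset.sum_add_distrib,
      ← Finset.sum_sub_distrib]
    exact Finset.sum_congr rfl fun r _ => by ring
  rw [pythagoras, h, mul_zero, sub_zero]
  exact le_add_of_nonneg_right (Finset.sum_nonneg fun r _ => sq_nonneg _)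

theorem one_sub_div_mul_abs_le_of_abs_sub_le {K : Type*} [Field K] [LinearOrder K]
    [IsStrictOrderedRing K] {a b d e : K} (hd : 0 < d) (hdb : d ≤ |b|) (he : |a - b| ≤ e) :
    (1 - e / d) * |b| ≤ |a| := by
  have he0 : 0 ≤ e := (abs_nonneg _).trans he
  have error_le : e ≤ e / d * |b| :=
    calc e = e / d * d := (div_mul_cancel₀ e hd.ne').symm
      _ ≤ e / d * |b| := by gcongr
  have triangle : |b| - |a| ≤ |a - b| := abs_sub_comm a b ▸ abs_sub_abs_le_abs_sub b a
  linarith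

section FinsetSupport

variable {ι R : Type*} [Fintype ι]

theorem card_filter_ne_zero_le [Zero R] [DecidableEq R] {T : Finset ι} {v : ι → R}
    (hv : ∀ i ∉ T, v i = 0) : #{i | v i ≠ 0} ≤ #T :=
  card_le_card fun i hi => not_imp_comm.mp (hv i) (mem_filter.mp hi).2

theorem sum_piecewise_zero_sq [Semiring R] [DecidableEq ι] (S : Finset ι) (v : ι → R) :
    ∑ i, S.piecewise v 0 i ^ 2 = ∑ i ∈ S, v i ^ 2 := by
  simp [Finset.piecewise, ite_pow]

end FinsetSupport

section ColumnRestriction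

variable {ι κ R : Type*}

/-- The submatrix `A_S` of the columns of `A` indexed by `S`. -/
def colRestrict (A : Matrix κ ι R) (S : Finset ι) : Matrix κ {i // i ∈ S} R :=
  A.submatrix id (↑)

theorem colRestrict_mulVec [Fintype ι] [NonUnitalNonAssocSemiring R] (A : Matrix κ ι R)
    {S : Finset ι} {v : ι → R} (hv : ∀ i ∉ S, v i = 0) :
    colRestrict A S *ᵥ (fun i => v i) = A *ᵥ v := by
  ext r
  simp only [colRestrict, mulVec, dotProduct, submatrix_apply, id]
  rw [Finset.sum_coe_sort S fun i => A r i * v i]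
  exact Finset.sum_subset (Finset.subset_univ S) fun i _ hi => by rw [hv i hi, mul_zero]

end ColumnRestriction

section RestrictedIsometry

variable {ι κ : Type*} [Fintype ι] [Fintype κ] {A : Matrix κ ι ℝ} {s : ℕ} {δ : ℝ}

/-- The restricted isometry property of order `s` with constant `δ`:
`(1 - δ) ‖v‖² ≤ ‖A v‖² ≤ (1 + δ) ‖v‖²` for every `s`-sparse vector `v`. The squared Euclidean norms
are written as sums of squares, because the norm of a function type is the supremum norm. -/
def RestrictedIsometry (A : Matrix κ ι ℝ) (s : ℕ) (δ : ℝ) : Prop :=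
  ∀ v : ι → ℝ, #{i | v i ≠ 0} ≤ s →
    (1 - δ) * ∑ i, v i ^ 2 ≤ ∑ r, (A *ᵥ v) r ^ 2 ∧ ∑ r, (A *ᵥ v) r ^ 2 ≤ (1 + δ) * ∑ i, v i ^ 2

theorem RestrictedIsometry.colRestrict_mulVec_injective (hA : RestrictedIsometry A s δ)
    (hδ : δ < 1) {S : Finset ι} (hS : #S ≤ s) :
    Function.Injective (colRestrict A S).mulVec := by
  rw [← coe_mulVecLin, injective_iff_map_eq_zero]
  intro v hv
  set z : ι → ℝ := Function.extend Subtype.val v 0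
  have z_coe (i : {i // i ∈ S}) : z i = v i := Subtype.val_injective.extend_apply v _ i
  have z_off (i : ι) (hi : i ∉ S) : z i = 0 :=
    Function.extend_apply' v _ i fun ⟨j, hj⟩ => hi (hj ▸ j.2)
  have Az : A *ᵥ z = 0 := by
    rw [← colRestrict_mulVec A z_off, funext z_coe]
    exact hv
  have sum_nonpos : (1 - δ) * ∑ i, z i ^ 2 ≤ 0 := by
    simpa [Az] using (hA z ((card_filter_ne_zero_le z_off).trans hS)).1
  have sum_eq_zero : ∑ i, z i ^ 2 = 0 :=
    (nonpos_of_mul_nonpos_right sum_nonpos (sub_pos.mpr hδ)).antisymm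
      (Finset.sum_nonneg fun i _ => sq_nonneg _)
  ext i
  rw [← z_coe]
  exact pow_eq_zero_iff two_ne_zero |>.mp <|
    (Finset.sum_eq_zero_iff_of_nonneg fun i _ => sq_nonneg (z i)).mp sum_eq_zero i (mem_univ _)

theorem RestrictedIsometry.sum_sq_le_of_dotProduct_eq_zero (hA : RestrictedIsometry A s δ)
    {w u : ι → ℝ} (hw : #{i | w i ≠ 0} ≤ s) (hu : #{i | u i ≠ 0} ≤ s)
    (h : (A *ᵥ w) ⬝ᵥ (A *ᵥ w - A *ᵥ u) = 0) :
    (1 - δ) * ∑ i, w i ^ 2 ≤ (1 + δ) * ∑ i, u i ^ 2 :=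
  (hA w hw).1.trans <| (sum_sq_le_of_dotProduct_sub_eq_zero h).trans (hA u hu).2

variable [DecidableEq ι] {S T : Finset ι} {x y : ι → ℝ}

theorem RestrictedIsometry.mulVec_dotProduct_residual_eq_zero (hA : RestrictedIsometry A s δ)
    (hδ : δ < 1) (hS : #S ≤ s) (hxS : ∀ i ∉ S, x i = 0)
    (hx : ∀ i : {i // i ∈ S}, x i = leastSquares (colRestrict A S) (A *ᵥ y) i)
    {v : ι → ℝ} (hv : ∀ i ∉ S, v i = 0) : (A *ᵥ v) ⬝ᵥ (A *ᵥ x - A *ᵥ y) = 0 := by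
  rw [← colRestrict_mulVec A hv, ← colRestrict_mulVec A hxS, funext hx]
  exact mulVec_dotProduct_leastSquares_residual
    (isUnit_transpose_mul_self_of_injective (hA.colRestrict_mulVec_injective hδ hS)) _ _

theorem RestrictedIsometry.sum_sq_leastSquares_sub_le (hA : RestrictedIsometry A s δ) (hδ : δ < 1)
    (hT : #T ≤ s) (hyT : ∀ i ∉ T, y i = 0) (hS : #S ≤ s) (hxS : ∀ i ∉ S, x i = 0)
    (hx : ∀ i : {i // i ∈ S}, x i = leastSquares (colRestrict A S) (A *ᵥ y) i) :
    (1 - δ) * ∑ i ∈ S, (x i - y i) ^ 2 ≤ (1 + δ) * ∑ i ∈ T \ S, y i ^ 2 := by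
  set w : ι → ℝ := S.piecewise (x - y) 0
  set u : ι → ℝ := (T \ S).piecewise y 0
  have w_off (i : ι) (hi : i ∉ S) : w i = 0 := S.piecewise_eq_of_notMem _ _ hi
  have u_off (i : ι) (hi : i ∉ T \ S) : u i = 0 := (T \ S).piecewise_eq_of_notMem _ _ hi
  have sub_eq : w - u = x - y := by
    ext i
    by_cases hiS : i ∈ S
    · simp [w, u, hiS]
    · by_cases hiT : i ∈ T <;> simp [w, u, hiS, hiT, hxS, hyT]
  have orthogonal : (A *ᵥ w) ⬝ᵥ (A *ᵥ w - A *ᵥ u) = 0 := by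
    rw [← mulVec_sub, sub_eq, mulVec_sub]
    exact hA.mulVec_dotProduct_residual_eq_zero hδ hS hxS hx w_off
  have bound := hA.sum_sq_le_of_dotProduct_eq_zero ((card_filter_ne_zero_le w_off).trans hS)
    ((card_filter_ne_zero_le u_off).trans ((card_le_card sdiff_subset).trans hT)) orthogonal
  rwa [sum_piecewise_zero_sq, sum_piecewise_zero_sq] at bound

theorem RestrictedIsometry.abs_leastSquares_sub_le (hA : RestrictedIsometry A s δ) (hδ : δ < 1)
    (hT : #T ≤ s) (hyT : ∀ i ∉ T, y i = 0) (hS : #S ≤ s) (hxS : ∀ i ∉ S, x i = 0)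
    (hx : ∀ i : {i // i ∈ S}, x i = leastSquares (colRestrict A S) (A *ᵥ y) i)
    {l : ι} (hl : l ∈ S) :
    |x l - y l| ≤ √((1 + δ) / (1 - δ)) * √(∑ i ∈ T \ S, y i ^ 2) := by
  rw [← Real.sqrt_mul' _ (Finset.sum_nonneg fun i _ => sq_nonneg _)]
  apply Real.abs_le_sqrt
  calc (x l - y l) ^ 2
      ≤ ∑ i ∈ S, (x i - y i) ^ 2 :=
        Finset.single_le_sum (f := fun i => (x i - y i) ^ 2) (fun i _ => sq_nonneg _) hl
    _ ≤ (1 + δ) / (1 - δ) * ∑ i ∈ T \ S, y i ^ 2 := by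
        rw [div_mul_eq_mul_div, le_div_iff₀' (sub_pos.mpr hδ)]
        exact hA.sum_sq_leastSquares_sub_le hδ hT hyT hS hxS hx

theorem stmt14_general {γ : ℝ} (hA : RestrictedIsometry A s δ) (hδ : δ < 1) (hγ : 0 < γ)
    (hT : #T ≤ s) (hyT : ∀ i ∉ T, y i = 0) (hS : #S ≤ s) (hxS : ∀ i ∉ S, x i = 0)
    (hx : ∀ i : {i // i ∈ S}, x i = leastSquares (colRestrict A S) (A *ᵥ y) i)
    {l : ι} (hl : l ∈ S) (hne : √(∑ i ∈ T.erase l, y i ^ 2) ≠ 0)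
    (hdom : γ * √(∑ i ∈ T.erase l, y i ^ 2) ≤ |y l|) :
    (1 - 1 / γ * √((1 + δ) / (1 - δ)) *
      (√(∑ i ∈ T \ S, y i ^ 2) / √(∑ i ∈ T.erase l, y i ^ 2))) * |y l| ≤ |x l| := by
  have hpos : 0 < √(∑ i ∈ T.erase l, y i ^ 2) := (Real.sqrt_nonneg _).lt_of_ne' hne
  have herr := hA.abs_leastSquares_sub_le hδ hT hyT hS hxS hx hl
  have coeff : 1 / γ * √((1 + δ) / (1 - δ)) *
      (√(∑ i ∈ T \ S, y i ^ 2) / √(∑ i ∈ T.erase l, y i ^ 2)) =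
      √((1 + δ) / (1 - δ)) * √(∑ i ∈ T \ S, y i ^ 2) / (γ * √(∑ i ∈ T.erase l, y i ^ 2)) := by
    rw [one_div_mul_eq_div, div_mul_div_comm]
  rw [coeff]
  exact one_sub_div_mul_abs_le_of_abs_sub_le (mul_pos hγ hpos) hdom herr

end RestrictedIsometry

/-- HTP step, lower bound on `|x_l|` when `l ∈ S ∩ S*`. -/
theorem stmt14 (m N s : ℕ) (A : Matrix (Fin m) (Fin N) ℝ) (δ γ : ℝ)
    (hδ0 : 0 ≤ δ) (hδ1 : δ < 1) (hγ : 0 < γ)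
    (hRIP : ∀ v : Fin N → ℝ, (suppF v).card ≤ s + 2 →
      (1 - δ) * (∑ i, v i ^ 2) ≤ (∑ r, (A.mulVec v r) ^ 2) ∧
      (∑ r, (A.mulVec v r) ^ 2) ≤ (1 + δ) * (∑ i, v i ^ 2))
    (xs : Fin N → ℝ) (hxs : (suppF xs).card ≤ s)
    (S : Finset (Fin N)) (hScard : S.card = s)
    (x : Fin N → ℝ)
    (hx0 : ∀ i, i ∉ S → x i = 0)
    (hxls : ∀ i : {i // i ∈ S}, x i.1 =
      ((((A.submatrix id ((↑) : {i // i ∈ S} → Fin N))ᵀ *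
          A.submatrix id ((↑) : {i // i ∈ S} → Fin N))⁻¹ *
        (A.submatrix id ((↑) : {i // i ∈ S} → Fin N))ᵀ).mulVec (A.mulVec xs)) i)
    (l : Fin N) (hl : ∀ i, |xs i| ≤ |xs l|)
    (hne : pnorm ((suppF xs).erase l) xs ≠ 0)
    (hdom : γ * pnorm ((suppF xs).erase l) xs ≤ |xs l|)
    (hlmem : l ∈ S ∩ suppF xs) :
    (1 - (1 / γ) * Real.sqrt ((1 + δ) / (1 - δ)) *
        (pnorm (suppF xs \ S) xs / pnorm ((suppF xs).erase l) xs)) * |xs l|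
      ≤ |x l| := by
  exact stmt14_general (T := suppF xs) (fun v hv => hRIP v (hv.trans (Nat.le_add_right s 2))) hδ1 hγ
    hxs (fun i hi => by simpa [suppF] using hi) hScard.le hx0 hxls (mem_inter.mp hlmem).1 hne hdom
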